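/- arXiv:2004.05290 — 2 statements merged into one kernel-verified Lean document; each statement's English description precedes it below -/
import Mathlib

section
/- Let x_{t+1} = 𝒜 x_t + ℬ u_t, y_t = 𝒞 x_t + 𝒟 u_t be a stable LTI system, in the sense that there exists 𝒫 ≻ 0 with 𝒫 − 𝒜ᵀ𝒫𝒜 ≻ 0. Then for the Robust RNN parameter choice E = 𝒫, P = 𝒫, F = 𝒫𝒜, B₁ = 0, B₂ = 𝒫ℬ, C₁ = 𝒞, D₁₁ = 0, D₁₂ = 𝒟, C₂ = 0, D₂₂ = 0, b = 0 and any diagonal positive definite Λ, LMI (11) holds (so θ ∈ Θ_*), and the resulting Robust RNN produces exactly the same state and output trajectories as the LTI system for every input sequence and every initial condition. -/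
open Matrix

/-- A function `φ : ℝ → ℝ` is slope-restricted on `[0, β]`:
`0 ≤ (φ y − φ x)/(y − x) ≤ β` for all `x ≠ y`. -/
def SlopeRestricted (β : ℝ) (φ : ℝ → ℝ) : Prop :=
  ∀ x y : ℝ, x ≠ y → 0 ≤ (φ y - φ x) / (y - x) ∧ (φ y - φ x) / (y - x) ≤ β

/-- The matrix of LMI (11):
`[[E + Eᵀ − P, −β C₂ᵀ], [−β C₂, 2Λ]] − [Fᵀ; B₁ᵀ] P⁻¹ [Fᵀ; B₁ᵀ]ᵀ`. -/
noncomputable def LMI11 {n q : ℕ} (β : ℝ)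
    (E F : Matrix (Fin n) (Fin n) ℝ) (B₁ : Matrix (Fin n) (Fin q) ℝ)
    (Λ : Matrix (Fin q) (Fin q) ℝ) (C₂ : Matrix (Fin q) (Fin n) ℝ)
    (P : Matrix (Fin n) (Fin n) ℝ) :
    Matrix (Fin n ⊕ Fin q) (Fin n ⊕ Fin q) ℝ :=
  Matrix.fromBlocks (E + Eᵀ - P) ((-β) • C₂ᵀ) ((-β) • C₂) ((2 : ℝ) • Λ)
    - (Matrix.fromRows Fᵀ B₁ᵀ) * P⁻¹ * (Matrix.fromRows Fᵀ B₁ᵀ)ᵀ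

/-- `(x, y)` is a state/output trajectory of the Robust RNN
`x_{t+1} = E⁻¹(F x_t + B₁ Φ(v_t) + B₂ u_t)`, `y_t = C₁ x_t + D₁₁ Φ(v_t) + D₁₂ u_t`,
`v_t = Λ⁻¹(C₂ x_t + b + D₂₂ u_t)`, driven by the input sequence `u`, where `Φ` applies
`φ` elementwise. -/
def IsRobustRNNTraj {n m p q : ℕ} (φ : ℝ → ℝ)
    (E F : Matrix (Fin n) (Fin n) ℝ) (B₁ : Matrix (Fin n) (Fin q) ℝ)
    (B₂ : Matrix (Fin n) (Fin m) ℝ) (C₁ : Matrix (Fin p) (Fin n) ℝ)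
    (D₁₁ : Matrix (Fin p) (Fin q) ℝ) (D₁₂ : Matrix (Fin p) (Fin m) ℝ)
    (Λ : Matrix (Fin q) (Fin q) ℝ) (C₂ : Matrix (Fin q) (Fin n) ℝ)
    (b : Fin q → ℝ) (D₂₂ : Matrix (Fin q) (Fin m) ℝ)
    (u : ℕ → Fin m → ℝ) (x : ℕ → Fin n → ℝ) (y : ℕ → Fin p → ℝ) : Prop :=
  ∀ t : ℕ,
    x (t + 1) = E⁻¹ *ᵥ (F *ᵥ x t
        + B₁ *ᵥ (fun i => φ ((Λ⁻¹ *ᵥ (C₂ *ᵥ x t + b + D₂₂ *ᵥ u t)) i))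
        + B₂ *ᵥ u t) ∧
    y t = C₁ *ᵥ x t
        + D₁₁ *ᵥ (fun i => φ ((Λ⁻¹ *ᵥ (C₂ *ᵥ x t + b + D₂₂ *ᵥ u t)) i))
        + D₁₂ *ᵥ u t

theorem posDef_fromBlocks_zero {m n R : Type*} [Ring R] [PartialOrder R] [AddLeftMono R]
    [StarRing R] {A : Matrix m m R} {D : Matrix n n R} (hA : A.PosDef) (hD : D.PosDef) :
    (fromBlocks A 0 0 D).PosDef := by
  refine ⟨hA.isHermitian.fromBlocks (conjTranspose_zero ..) hD.isHermitian, fun z hz ↦ ?_⟩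
  obtain ⟨x, y, rfl⟩ : ∃ x y, z = Finsupp.sumElim x y :=
    ⟨_, _, (Finsupp.comapDomain_sumElim_comapDomain z).symm⟩
  have quadForm_eq :
      ((x.sumElim y).sum fun i zi ↦ (x.sumElim y).sum fun j zj ↦
        star zi * fromBlocks A 0 0 D i j * zj) =
      (x.sum fun i xi ↦ x.sum fun j xj ↦ star xi * A i j * xj) +
        y.sum fun i yi ↦ y.sum fun j yj ↦ star yi * D i j * yj := by
    simp [Finsupp.sum_sumElim, Function.comp_def]
  rw [quadForm_eq]
  obtain rfl | hx := eq_or_ne x 0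
  · have hy : y ≠ 0 := fun hy ↦ hz (hy ▸ Finsupp.sumElim_zero_zero)
    exact add_pos_of_nonneg_of_pos (hA.posSemidef.2 0) (hD.2 hy)
  · exact add_pos_of_pos_of_nonneg (hA.2 hx) (hD.posSemidef.2 y)

theorem transpose_mul_inv_mul_mul_self {n R : Type*} [Fintype n] [DecidableEq n] [CommRing R]
    {P : Matrix n n R} (hsymm : P.IsSymm) (hP : IsUnit P) (A : Matrix n n R) :
    (P * A)ᵀ * P⁻¹ * (P * A) = Aᵀ * P * A := by
  rw [Matrix.mul_assoc, nonsing_inv_mul_cancel_left P A ((isUnit_iff_isUnit_det P).1 hP),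
    transpose_mul, hsymm.eq]

section LinearMatrixInequality

variable {n q : ℕ}

theorem LMI11_zero_zero (β : ℝ) (E F : Matrix (Fin n) (Fin n) ℝ) (Λ : Matrix (Fin q) (Fin q) ℝ)
    (P : Matrix (Fin n) (Fin n) ℝ) :
    LMI11 β E F 0 Λ 0 P = fromBlocks (E + Eᵀ - P - Fᵀ * P⁻¹ * F) 0 0 ((2 : ℝ) • Λ) := by
  rw [LMI11, transpose_fromRows, fromRows_mul, fromRows_mul_fromCols, sub_eq_add_neg,
    fromBlocks_neg, fromBlocks_add]
  simp only [transpose_transpose, transpose_zero, Matrix.zero_mul, Matrix.mul_zero, smul_zero,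
    neg_zero, add_zero, ← sub_eq_add_neg]

theorem posDef_LMI11_of_lyapunov (β : ℝ) {A P : Matrix (Fin n) (Fin n) ℝ}
    {Λ : Matrix (Fin q) (Fin q) ℝ} (hP : P.PosDef) (hlyap : (P - Aᵀ * P * A).PosDef)
    (hΛ : Λ.PosDef) : (LMI11 β P (P * A) 0 Λ 0 P).PosDef := by
  have hsymm : P.IsSymm := isHermitian_iff_isSymm.1 hP.isHermitian
  rw [LMI11_zero_zero, hsymm.eq, add_sub_cancel_right,
    transpose_mul_inv_mul_mul_self hsymm hP.isUnit]
  exact posDef_fromBlocks_zero hlyap (hΛ.smul two_pos)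

end LinearMatrixInequality

section Trajectories

/-- `(x, y)` is a state/output trajectory of the discrete-time linear time-invariant system
`x_{t+1} = A x_t + B u_t`, `y_t = C x_t + D u_t` driven by the input sequence `u`; the initial
state `x 0` is left free. -/
def IsLTITraj {n m p R : Type*} [Fintype n] [Fintype m] [NonUnitalNonAssocSemiring R]
    (A : Matrix n n R) (B : Matrix n m R) (C : Matrix p n R) (D : Matrix p m R)
    (u : ℕ → m → R) (x : ℕ → n → R) (y : ℕ → p → R) : Prop :=
  ∀ t : ℕ, x (t + 1) = A *ᵥ x t + B *ᵥ u t ∧ y t = C *ᵥ x t + D *ᵥ u t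

namespace IsLTITraj

variable {n m p R : Type*} [Fintype n] [Fintype m] [NonUnitalNonAssocSemiring R]
  {A : Matrix n n R} {B : Matrix n m R} {C : Matrix p n R} {D : Matrix p m R}
  {u : ℕ → m → R} {x x' : ℕ → n → R} {y y' : ℕ → p → R}

theorem eq_of_initial_eq (h : IsLTITraj A B C D u x y) (h' : IsLTITraj A B C D u x' y')
    (h0 : x 0 = x' 0) (t : ℕ) : x t = x' t ∧ y t = y' t := by
  have state_eq : x t = x' t := by
    induction t with
    | zero => exact h0
    | succ t ih => rw [(h t).1, (h' t).1, ih]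
  exact ⟨state_eq, by rw [(h t).2, (h' t).2, state_eq]⟩

end IsLTITraj

variable {n m p q : ℕ}

theorem isRobustRNNTraj_iff_isLTITraj (φ : ℝ → ℝ) {E : Matrix (Fin n) (Fin n) ℝ} (hE : IsUnit E)
    (A : Matrix (Fin n) (Fin n) ℝ) (B : Matrix (Fin n) (Fin m) ℝ)
    (C : Matrix (Fin p) (Fin n) ℝ) (D : Matrix (Fin p) (Fin m) ℝ)
    (Λ : Matrix (Fin q) (Fin q) ℝ) (C₂ : Matrix (Fin q) (Fin n) ℝ)
    (b : Fin q → ℝ) (D₂₂ : Matrix (Fin q) (Fin m) ℝ)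
    (u : ℕ → Fin m → ℝ) (x : ℕ → Fin n → ℝ) (y : ℕ → Fin p → ℝ) :
    IsRobustRNNTraj φ E (E * A) 0 (E * B) C 0 D Λ C₂ b D₂₂ u x y ↔ IsLTITraj A B C D u x y := by
  have hdet : IsUnit E.det := (isUnit_iff_isUnit_det E).1 hE
  simp only [IsRobustRNNTraj, IsLTITraj, zero_mulVec, add_zero, mulVec_add, mulVec_mulVec,
    nonsing_inv_mul_cancel_left E _ hdet]

end Trajectories

theorem stmt_2_general {n m p q : ℕ} (β : ℝ) (φ : ℝ → ℝ)
    (A : Matrix (Fin n) (Fin n) ℝ) (B : Matrix (Fin n) (Fin m) ℝ)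
    (C : Matrix (Fin p) (Fin n) ℝ) (D : Matrix (Fin p) (Fin m) ℝ)
    (b : Fin q → ℝ) (D₂₂ : Matrix (Fin q) (Fin m) ℝ)
    {P : Matrix (Fin n) (Fin n) ℝ} (hP : P.PosDef) (hstab : (P - Aᵀ * P * A).PosDef)
    {Λ : Matrix (Fin q) (Fin q) ℝ} (hΛ : Λ.PosDef) :
    (LMI11 β P (P * A) 0 Λ 0 P).PosDef ∧
    ∀ (u : ℕ → Fin m → ℝ) (x : ℕ → Fin n → ℝ) (y : ℕ → Fin p → ℝ),
      IsRobustRNNTraj φ P (P * A) 0 (P * B) C 0 D Λ 0 b D₂₂ u x y ↔ IsLTITraj A B C D u x y :=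
  ⟨posDef_LMI11_of_lyapunov β hP hstab hΛ,
    isRobustRNNTraj_iff_isLTITraj φ hP.isUnit A B C D Λ 0 b D₂₂⟩

/-- Theorem 3: every stable LTI system is contained in the Robust RNN set `Θ_*`:
the indicated parameter choice satisfies LMI (11) and reproduces the LTI trajectories. -/
theorem stmt_2 {n m p q : ℕ} (β : ℝ) (hβ : 0 < β)
    (φ : ℝ → ℝ) (hφ : SlopeRestricted β φ)
    (𝒜 : Matrix (Fin n) (Fin n) ℝ) (ℬ : Matrix (Fin n) (Fin m) ℝ)
    (𝒞 : Matrix (Fin p) (Fin n) ℝ) (𝒟 : Matrix (Fin p) (Fin m) ℝ)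
    (Pm : Matrix (Fin n) (Fin n) ℝ) (hPm : Pm.PosDef)
    (hstab : (Pm - 𝒜ᵀ * Pm * 𝒜).PosDef)
    (Λ : Matrix (Fin q) (Fin q) ℝ) (hΛdiag : Λ.IsDiag) (hΛpos : Λ.PosDef) :
    (LMI11 β Pm (Pm * 𝒜) (0 : Matrix (Fin n) (Fin q) ℝ) Λ
      (0 : Matrix (Fin q) (Fin n) ℝ) Pm).PosDef ∧
    ∀ (u : ℕ → Fin m → ℝ) (x₀ : Fin n → ℝ)
      (xR : ℕ → Fin n → ℝ) (yR : ℕ → Fin p → ℝ)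
      (xL : ℕ → Fin n → ℝ) (yL : ℕ → Fin p → ℝ),
      xR 0 = x₀ → xL 0 = x₀ →
      IsRobustRNNTraj φ Pm (Pm * 𝒜) (0 : Matrix (Fin n) (Fin q) ℝ) (Pm * ℬ) 𝒞
        (0 : Matrix (Fin p) (Fin q) ℝ) 𝒟 Λ (0 : Matrix (Fin q) (Fin n) ℝ)
        (0 : Fin q → ℝ) (0 : Matrix (Fin q) (Fin m) ℝ) u xR yR →
      (∀ t, xL (t + 1) = 𝒜 *ᵥ xL t + ℬ *ᵥ u t) →
      (∀ t, yL t = 𝒞 *ᵥ xL t + 𝒟 *ᵥ u t) →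
      ∀ t, xR t = xL t ∧ yR t = yL t := by
  have ⟨hLMI, htraj⟩ := stmt_2_general β φ 𝒜 ℬ 𝒞 𝒟 0 0 hPm hstab hΛpos
  exact ⟨hLMI, fun u _ _ _ _ _ hR0 hL0 hR hx hy ↦
    ((htraj u _ _).1 hR).eq_of_initial_eq (fun t ↦ ⟨hx t, hy t⟩) (hR0.trans hL0.symm)⟩
end

section
/- Let a contracting implicit RNN (ci-RNN) be given by ℰ z_{t+1} = Φ(ℱ z_t + ℬ u_t + 𝔟), y_t = 𝒞 z_t + 𝒟 u_t, where φ is slope-restricted on [0, 1], ℰ, ℱ ∈ ℝ^{q×q}, and there exists a diagonal positive definite 𝒫 ∈ ℝ^{q×q} satisfying the contraction condition that the block matrix [[ℰ + ℰᵀ − 𝒫, ℱᵀ], [ℱ, 𝒫]] is positive definite. Then the Robust RNN parameter choice E = ℰ, F = 0, B₁ = I, B₂ = 0, C₁ = 𝒞, D₁₁ = 0, D₁₂ = 𝒟, Λ = 𝒫⁻¹, C₂ = 𝒫⁻¹ℱ, D₂₂ = 𝒫⁻¹ℬ, b = 𝒫⁻¹𝔟, P = 𝒫 satisfies LMI (11)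 with β = 1 (so θ ∈ Θ_*), and the resulting Robust RNN has exactly the same state and output trajectories as the ci-RNN for every input sequence and initial condition. -/
open Matrix

/-!
Since `B₁ = 1` and `Λ = P⁻¹`, the lower right block `2Λ - B₁ᵀP⁻¹B₁` of LMI (11) is again `P⁻¹`, so
the LMI matrix is the congruence of the contraction matrix by `diag(1, -P⁻¹)`. The contraction
condition also forces `ℰ + ℰᵀ ≻ P ≻ 0`, so `ℰ` has no kernel and the implicit recursion determines
its trajectories. The factors `P⁻¹` in `C₂`, `b` and `D₂₂` cancel against `Λ⁻¹ = P`, which makes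
the two recursions the same.
-/

theorem isUnit_of_posDef_add_conjTranspose {K n : Type*} [Field K] [PartialOrder K] [StarRing K]
    [Fintype n] [DecidableEq n] {E : Matrix n n K} (hE : (E + Eᴴ).PosDef) : IsUnit E := by
  rw [isUnit_iff_isUnit_det, isUnit_iff_ne_zero]
  intro hdet
  obtain ⟨v, hv, hEv⟩ := exists_mulVec_eq_zero_iff.mpr hdet
  have hEv' : star v ⬝ᵥ Eᴴ *ᵥ v = 0 := by
    rw [dotProduct_mulVec, ← star_mulVec, hEv, star_zero, zero_dotProduct]
  have hpos := hE.dotProduct_mulVec_pos hv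
  rw [add_mulVec, dotProduct_add, hEv, hEv', dotProduct_zero, add_zero] at hpos
  exact hpos.false

theorem isUnit_of_posDef_fromBlocks_add_conjTranspose_sub {K n : Type*} [Field K]
    [PartialOrder K] [StarRing K] [AddLeftMono K] [Fintype n] [DecidableEq n]
    {E P B C : Matrix n n K} (h : (fromBlocks (E + Eᴴ - P) B C P).PosDef) : IsUnit E := by
  have hsub : (E + Eᴴ - P).PosDef := h.submatrix Sum.inl_injective
  have hP : P.PosDef := h.submatrix Sum.inr_injective
  exact isUnit_of_posDef_add_conjTranspose (sub_add_cancel (E + Eᴴ) P ▸ hsub.add hP)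

theorem posDef_fromBlocks_neg_inv_mul_iff {R m n : Type*} [CommRing R] [PartialOrder R]
    [StarRing R] [Finite m] [Fintype n] [DecidableEq n] {A : Matrix m m R}
    {B : Matrix n m R} {D : Matrix n n R} (hD : D.IsHermitian) (hDu : IsUnit D) :
    (fromBlocks A (-(D⁻¹ * B)ᴴ) (-(D⁻¹ * B)) D⁻¹).PosDef ↔ (fromBlocks A Bᴴ B D).PosDef := by
  classical
  have := Fintype.ofFinite m
  set T : Matrix (m ⊕ n) (m ⊕ n) R := fromBlocks 1 0 0 (-D⁻¹) with hT
  have hTu : IsUnit T :=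
    isUnit_fromBlocks_zero₂₁.mpr ⟨isUnit_one, (isUnit_nonsing_inv_iff.mpr hDu).neg⟩
  have hcongr : fromBlocks A (-(D⁻¹ * B)ᴴ) (-(D⁻¹ * B)) D⁻¹ = star T * fromBlocks A Bᴴ B D * T := by
    have hDet : IsUnit D.det := (isUnit_iff_isUnit_det D).mp hDu
    simp [hT, star_eq_conjTranspose, fromBlocks_conjTranspose, fromBlocks_multiply, hD.inv.eq,
      nonsing_inv_mul D hDet]
  rw [hcongr, hTu.posDef_star_left_conjugate_iff]

theorem LMI11_eq_fromBlocks {n q : ℕ} (β : ℝ) (E F : Matrix (Fin n) (Fin n) ℝ)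
    (B₁ : Matrix (Fin n) (Fin q) ℝ) (Λ : Matrix (Fin q) (Fin q) ℝ) (C₂ : Matrix (Fin q) (Fin n) ℝ)
    (P : Matrix (Fin n) (Fin n) ℝ) :
    LMI11 β E F B₁ Λ C₂ P =
      fromBlocks (E + Eᵀ - P - Fᵀ * P⁻¹ * F) ((-β) • C₂ᵀ - Fᵀ * P⁻¹ * B₁)
        ((-β) • C₂ - B₁ᵀ * P⁻¹ * F) ((2 : ℝ) • Λ - B₁ᵀ * P⁻¹ * B₁) := by
  rw [LMI11, transpose_fromRows, transpose_transpose, transpose_transpose, fromRows_mul,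
    fromRows_mul_fromCols, sub_eq_add_neg, fromBlocks_neg, fromBlocks_add]
  simp only [sub_eq_add_neg]

theorem posDef_LMI11_iff_contraction {q : ℕ} {ℰ ℱ P : Matrix (Fin q) (Fin q) ℝ}
    (hP : P.IsHermitian) (hPu : IsUnit P) :
    (LMI11 1 ℰ 0 1 P⁻¹ (P⁻¹ * ℱ) P).PosDef ↔ (fromBlocks (ℰ + ℰᵀ - P) ℱᵀ ℱ P).PosDef := by
  have hLMI : LMI11 1 ℰ 0 1 P⁻¹ (P⁻¹ * ℱ) P =
      fromBlocks (ℰ + ℰᵀ - P) (-(P⁻¹ * ℱ)ᴴ) (-(P⁻¹ * ℱ)) P⁻¹ := by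
    simp [LMI11_eq_fromBlocks, conjTranspose_eq_transpose_of_trivial, two_smul]
  rw [hLMI, posDef_fromBlocks_neg_inv_mul_iff hP hPu, conjTranspose_eq_transpose_of_trivial]

/-- `(z, y)` is a state/output trajectory of the implicit RNN `ℰ z_{t+1} = Φ(ℱ z_t + ℬ u_t + 𝔟)`,
`y_t = 𝒞 z_t + 𝒟 u_t` driven by `u`. The state equation stays implicit, so that `ℰ` need not be
invertible. -/
def IsImplicitRNNTraj {m n p : Type*} [Fintype m] [Fintype n] (φ : ℝ → ℝ) (ℰ ℱ : Matrix n n ℝ)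
    (ℬ : Matrix n m ℝ) (𝔟 : n → ℝ) (𝒞 : Matrix p n ℝ) (𝒟 : Matrix p m ℝ) (u : ℕ → m → ℝ)
    (z : ℕ → n → ℝ) (y : ℕ → p → ℝ) : Prop :=
  ∀ t, ℰ *ᵥ z (t + 1) = (fun i => φ ((ℱ *ᵥ z t + ℬ *ᵥ u t + 𝔟) i)) ∧ y t = 𝒞 *ᵥ z t + 𝒟 *ᵥ u t

theorem IsImplicitRNNTraj.eq_of_initial_eq {m n p : Type*} [Fintype m] [Fintype n]
    {φ : ℝ → ℝ} {ℰ ℱ : Matrix n n ℝ} {ℬ : Matrix n m ℝ} {𝔟 : n → ℝ} {𝒞 : Matrix p n ℝ}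
    {𝒟 : Matrix p m ℝ} {u : ℕ → m → ℝ} {x z : ℕ → n → ℝ} {yx yz : ℕ → p → ℝ}
    (hℰ : Function.Injective ℰ.mulVec)
    (hx : IsImplicitRNNTraj φ ℰ ℱ ℬ 𝔟 𝒞 𝒟 u x yx) (hz : IsImplicitRNNTraj φ ℰ ℱ ℬ 𝔟 𝒞 𝒟 u z yz)
    (h₀ : x 0 = z 0) (t : ℕ) : x t = z t ∧ yx t = yz t := by
  have hstate : x t = z t := by
    induction t with
    | zero => exact h₀
    | succ t ih =>
      apply hℰ
      rw [(hx t).1, (hz t).1, ih]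
  exact ⟨hstate, by rw [(hx t).2, (hz t).2, hstate]⟩

theorem inv_mulVec_mul_mulVec_add {R m n k : Type*} [CommRing R] [Fintype m] [Fintype n]
    [DecidableEq n] [Fintype k] {Λ : Matrix n n R} (hΛ : IsUnit Λ) (ℱ : Matrix n k R)
    (ℬ : Matrix n m R) (𝔟 : n → R) (x : k → R) (u : m → R) :
    Λ⁻¹ *ᵥ ((Λ * ℱ) *ᵥ x + Λ *ᵥ 𝔟 + (Λ * ℬ) *ᵥ u) = ℱ *ᵥ x + ℬ *ᵥ u + 𝔟 := by
  have hdet : IsUnit Λ.det := (isUnit_iff_isUnit_det Λ).mp hΛ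
  rw [← mulVec_mulVec, ← mulVec_mulVec, ← mulVec_add, ← mulVec_add, mulVec_mulVec,
    nonsing_inv_mul Λ hdet, one_mulVec, add_right_comm]

theorem eq_inv_mulVec_iff_mulVec_eq {R n : Type*} [CommRing R] [Fintype n] [DecidableEq n]
    {A : Matrix n n R} (hA : IsUnit A) {v w : n → R} : v = A⁻¹ *ᵥ w ↔ A *ᵥ v = w := by
  have hdet : IsUnit A.det := (isUnit_iff_isUnit_det A).mp hA
  rw [← (mulVec_injective_of_isUnit hA).eq_iff, mulVec_mulVec, mul_nonsing_inv A hdet, one_mulVec]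

theorem isRobustRNNTraj_iff_isImplicitRNNTraj {m p q : ℕ} {φ : ℝ → ℝ}
    {ℰ ℱ Λ : Matrix (Fin q) (Fin q) ℝ} {ℬ : Matrix (Fin q) (Fin m) ℝ} {𝔟 : Fin q → ℝ}
    {𝒞 : Matrix (Fin p) (Fin q) ℝ} {𝒟 : Matrix (Fin p) (Fin m) ℝ} {u : ℕ → Fin m → ℝ}
    {x : ℕ → Fin q → ℝ} {y : ℕ → Fin p → ℝ} (hℰ : IsUnit ℰ) (hΛ : IsUnit Λ) :
    IsRobustRNNTraj φ ℰ 0 1 0 𝒞 0 𝒟 Λ (Λ * ℱ) (Λ *ᵥ 𝔟) (Λ * ℬ) u x y ↔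
      IsImplicitRNNTraj φ ℰ ℱ ℬ 𝔟 𝒞 𝒟 u x y := by
  simp only [IsRobustRNNTraj, IsImplicitRNNTraj, inv_mulVec_mul_mulVec_add hΛ, zero_mulVec,
    one_mulVec, zero_add, add_zero, eq_inv_mulVec_iff_mulVec_eq hℰ]

theorem stmt_3_general {m p q : ℕ} (φ : ℝ → ℝ)
    (ℰ ℱ : Matrix (Fin q) (Fin q) ℝ) (ℬ : Matrix (Fin q) (Fin m) ℝ)
    (𝔟 : Fin q → ℝ) (𝒞 : Matrix (Fin p) (Fin q) ℝ) (𝒟 : Matrix (Fin p) (Fin m) ℝ)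
    (P : Matrix (Fin q) (Fin q) ℝ) (hcontr : (fromBlocks (ℰ + ℰᵀ - P) ℱᵀ ℱ P).PosDef) :
    (LMI11 1 ℰ 0 1 P⁻¹ (P⁻¹ * ℱ) P).PosDef ∧
    ∀ (u : ℕ → Fin m → ℝ) (z : ℕ → Fin q → ℝ) (y : ℕ → Fin p → ℝ)
      (x : ℕ → Fin q → ℝ) (yR : ℕ → Fin p → ℝ),
      IsImplicitRNNTraj φ ℰ ℱ ℬ 𝔟 𝒞 𝒟 u z y →
      x 0 = z 0 →
      IsRobustRNNTraj φ ℰ 0 1 0 𝒞 0 𝒟 P⁻¹ (P⁻¹ * ℱ) (P⁻¹ *ᵥ 𝔟) (P⁻¹ * ℬ) u x yR →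
      ∀ t, x t = z t ∧ yR t = y t := by
  have hP : P.PosDef := hcontr.submatrix Sum.inr_injective
  have hℰ : IsUnit ℰ := isUnit_of_posDef_fromBlocks_add_conjTranspose_sub
    (by rwa [conjTranspose_eq_transpose_of_trivial])
  refine ⟨(posDef_LMI11_iff_contraction hP.isHermitian hP.isUnit).mpr hcontr, ?_⟩
  intro u z y x yR hz h₀ hx
  have hx' : IsImplicitRNNTraj φ ℰ ℱ ℬ 𝔟 𝒞 𝒟 u x yR :=
    (isRobustRNNTraj_iff_isImplicitRNNTraj hℰ hP.inv.isUnit).mp hx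
  exact hx'.eq_of_initial_eq (mulVec_injective_of_isUnit hℰ) hz h₀

/-- Theorem 4: every contracting implicit RNN (ci-RNN) is contained in the Robust RNN
set `Θ_*`: the indicated parameter choice satisfies LMI (11) with `β = 1` and reproduces
the ci-RNN trajectories. -/
theorem stmt_3 {m p q : ℕ}
    (φ : ℝ → ℝ) (hφ : SlopeRestricted 1 φ)
    (ℰ ℱ : Matrix (Fin q) (Fin q) ℝ) (ℬ : Matrix (Fin q) (Fin m) ℝ)
    (𝔟 : Fin q → ℝ) (𝒞 : Matrix (Fin p) (Fin q) ℝ) (𝒟 : Matrix (Fin p) (Fin m) ℝ)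
    (Pm : Matrix (Fin q) (Fin q) ℝ) (hPmdiag : Pm.IsDiag) (hPmpos : Pm.PosDef)
    (hcontr : (Matrix.fromBlocks (ℰ + ℰᵀ - Pm) ℱᵀ ℱ Pm).PosDef) :
    (LMI11 1 ℰ (0 : Matrix (Fin q) (Fin q) ℝ) (1 : Matrix (Fin q) (Fin q) ℝ)
      Pm⁻¹ (Pm⁻¹ * ℱ) Pm).PosDef ∧
    ∀ (u : ℕ → Fin m → ℝ) (z : ℕ → Fin q → ℝ) (y : ℕ → Fin p → ℝ)
      (x : ℕ → Fin q → ℝ) (yR : ℕ → Fin p → ℝ),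
      (∀ t, ℰ *ᵥ z (t + 1) = fun i => φ ((ℱ *ᵥ z t + ℬ *ᵥ u t + 𝔟) i)) →
      (∀ t, y t = 𝒞 *ᵥ z t + 𝒟 *ᵥ u t) →
      x 0 = z 0 →
      IsRobustRNNTraj φ ℰ (0 : Matrix (Fin q) (Fin q) ℝ)
        (1 : Matrix (Fin q) (Fin q) ℝ) (0 : Matrix (Fin q) (Fin m) ℝ) 𝒞
        (0 : Matrix (Fin p) (Fin q) ℝ) 𝒟 Pm⁻¹ (Pm⁻¹ * ℱ) (Pm⁻¹ *ᵥ 𝔟) (Pm⁻¹ * ℬ)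
        u x yR →
      ∀ t, x t = z t ∧ yR t = y t := by
  obtain ⟨hLMI, htraj⟩ := stmt_3_general φ ℰ ℱ ℬ 𝔟 𝒞 𝒟 Pm hcontr
  exact ⟨hLMI, fun u z y x yR hz hy => htraj u z y x yR fun t => ⟨hz t, hy t⟩⟩
end
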